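/- Let 𝒫 = (P, μ, σ) be a 2-dimensional system. Then every maximizer q ∈ ℰ^{exp,1}(P) of the toric non-archimedean μ-entropy 𝜇̌_NA — i.e. every q ∈ ℰ^{exp,1}(P) with 𝜇̌_NA(q) ≥ 𝜇̌_NA(q') for all q' ∈ ℰ^{exp,1}(P) — is bounded and continuous on P. -/

import Mathlib

open MeasureTheory Filter Topology
open scoped ENNReal NNReal

noncomputable section

abbrev Euc (n : ℕ) := EuclideanSpace ℝ (Fin n)

/-- A `[0,∞]`-valued function on a set `K ⊆ ℝⁿ` is convex if
`u((1−t)x+ty) ≤ (1−t)u(x)+t·u(y)` in `[0,∞]` for all `x, y ∈ K` and `t ∈ [0,1]`. -/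
def ConvexFnOn {n : ℕ} (K : Set (Euc n)) (u : Euc n → ℝ≥0∞) : Prop :=
  ∀ ⦃x⦄, x ∈ K → ∀ ⦃y⦄, y ∈ K → ∀ ⦃t : ℝ⦄, 0 ≤ t → t ≤ 1 →
    u ((1 - t) • x + t • y) ≤ ENNReal.ofReal (1 - t) * u x + ENNReal.ofReal t * u y

/-- A polytope: a compact set with nonempty interior which is a finite
intersection of closed half-spaces (cut out by nonzero affine functions). -/
def IsPolytope {n : ℕ} (P : Set (Euc n)) : Prop :=
  IsCompact P ∧ (interior P).Nonempty ∧
    ∃ (m : ℕ) (L : Fin m → (Euc n →ᵃ[ℝ] ℝ)),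
      (∀ k, L k ≠ 0) ∧ P = ⋂ k, {x | 0 ≤ L k x}

/-- `F` is a face of `P`: the intersection of `P` with the zero locus of a
nonzero affine function that is nonnegative on `P`. -/
def IsFaceOf {n : ℕ} (P F : Set (Euc n)) : Prop :=
  ∃ ℓ : Euc n →ᵃ[ℝ] ℝ, ℓ ≠ 0 ∧ (∀ y ∈ P, 0 ≤ ℓ y) ∧ F = {y ∈ P | ℓ y = 0}

/-- A facet: a face spanning an affine subspace of dimension `n − 1`. -/
def IsFacetOf {n : ℕ} (P F : Set (Euc n)) : Prop :=
  IsFaceOf P F ∧ Module.finrank ℝ (vectorSpan ℝ F) + 1 = n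

/-- A simple polytope: every vertex lies on exactly `n` facets. -/
def IsSimplePolytope {n : ℕ} (P : Set (Euc n)) : Prop :=
  IsPolytope P ∧ ∀ v : Euc n, IsFaceOf P {v} →
    {F : Set (Euc n) | IsFacetOf P F ∧ v ∈ F}.ncard = n

/-- An `n`-dimensional system `𝒫 = (P, μ, σ)`: a simple polytope `P ⊆ ℝⁿ`, a flat
measure `μ` on `P` (a positive constant multiple of Lebesgue measure restricted
to `P`), and a flat measure `σ` on `∂P` (supported on the boundary and, on each
facet, a positive constant multiple of `(n−1)`-dimensional Hausdorff measure). -/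
structure NSystem (n : ℕ) where
  P : Set (Euc n)
  μ : Measure (Euc n)
  σ : Measure (Euc n)
  simple : IsSimplePolytope P
  flat : ∃ c : ℝ, 0 < c ∧ μ = ENNReal.ofReal c • volume.restrict P
  bdry_supp : σ (frontier P)ᶜ = 0
  flat_bdry : ∀ F : Set (Euc n), IsFacetOf P F →
    ∃ c : ℝ, 0 < c ∧ σ.restrict F =
      ENNReal.ofReal c • (Measure.hausdorffMeasure ((n : ℝ) - 1)).restrict F

/-- A `(−∞,∞]`-valued function on `P` is convex if
`q((1−t)x+ty) ≤ (1−t)q(x)+t·q(y)` for all `x, y ∈ P` and `t ∈ [0,1]`. -/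
def EConvexOn {n : ℕ} (P : Set (Euc n)) (q : Euc n → EReal) : Prop :=
  ∀ ⦃x⦄, x ∈ P → ∀ ⦃y⦄, y ∈ P → ∀ ⦃t : ℝ⦄, 0 ≤ t → t ≤ 1 →
    q ((1 - t) • x + t • y) ≤ ((1 - t : ℝ) : EReal) * q x + ((t : ℝ) : EReal) * q y

/-- The exponential `[−∞,∞] → [0,∞]`. -/
def expE (x : EReal) : ℝ≥0∞ :=
  if x = ⊤ then ⊤ else if x = ⊥ then 0 else ENNReal.ofReal (Real.exp x.toReal)

/-- `ℰ^{exp,1}(P)`: lower semi-continuous convex `q : P → (−∞,∞]` with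
`∫_P e^q dμ < ∞`. -/
def EExpOne {n : ℕ} (S : NSystem n) : Set (Euc n → EReal) :=
  {q | LowerSemicontinuousOn q S.P ∧ (∀ x ∈ S.P, q x ≠ ⊥) ∧ EConvexOn S.P q ∧
    (∫⁻ x in S.P, expE (q x) ∂S.μ) < ⊤}

/-- The toric non-archimedean μ-entropy
`𝜇̌_NA(q) = −2π (∫_{∂P} e^q dσ) / (∫_P e^q dμ)`. -/
def muNA {n : ℕ} (S : NSystem n) (q : Euc n → EReal) : EReal :=
  ((-(2 * Real.pi) : ℝ) : EReal) *
    (((∫⁻ x in frontier S.P, expE (q x) ∂S.σ) / (∫⁻ x in S.P, expE (q x) ∂S.μ)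
        : ℝ≥0∞) : EReal)

/-!
Let `q` be a maximizer, extended by `∞` off `P`, and let `w` be a direction transverse to the
boundary. Replace `q` by its infimal convolution `q'` along `w` with a linear penalty of slope `N`.
By convexity, `e^q - e^q'` decreases along `w` in `P`, and for large `N` it vanishes at any fixed
depth. Hence `∫_P (e^q - e^q')` is at most a small multiple of `∫_∂P (e^q - e^q')`, the multiple
being proportional to the depth, and passing from `q` to `q'` would raise the entropy unless
`q = q'` almost everywhere on `P`. Since `q' x ≤ q (x + w) + N`, choosing `w` so that `v + w` lies
in the interior of `P` bounds `q` near an arbitrary point `v` of `P`. A bounded lower semicontinuous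
convex function on a polytope is continuous.
-/

open scoped Pointwise
open Module (finrank)

section Exponential

lemma expE_eq_exp : expE = EReal.exp := by
  ext1 x
  induction x using EReal.rec with
  | bot => simp [expE]
  | top => simp [expE]
  | coe c => simp [expE]

lemma expE_mono : Monotone expE := expE_eq_exp ▸ EReal.exp_monotone

lemma expE_sub_le_expE_add_sub_expE_add (a b : EReal) {r : ℝ} (hr : 0 ≤ r) :
    expE a - expE b ≤ expE (a + r) - expE (b + r) := by
  rw [expE_eq_exp, EReal.exp_add, EReal.exp_add, ← ENNReal.sub_mul (fun _ _ => by simp)]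
  exact le_mul_of_one_le_right' (by simpa using hr)

end Exponential

section ClosedConvex

variable {E : Type*} [NormedAddCommGroup E] [NormedSpace ℝ E]

lemma convex_interior_closure_subset [FiniteDimensional ℝ E] {s : Set E} (hs : Convex ℝ s) :
    interior (closure s) ⊆ interior s := by
  rcases (interior (closure s)).eq_empty_or_nonempty with hempty | hne
  · exact hempty ▸ Set.empty_subset _
  have hspan : affineSpan ℝ s = ⊤ := by
    rw [eq_top_iff, ← isOpen_interior.affineSpan_eq_top hne]
    exact affineSpan_le.2 <| interior_subset.trans <|
      closure_minimal (subset_affineSpan ℝ s) (affineSpan ℝ s).closed_of_finiteDimensional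
  exact (hs.interior_closure_eq_interior_of_nonempty_interior
    (hs.interior_nonempty_iff_affineSpan_eq_top.2 hspan)).subset

/-- Closed convex functions with values in `(-∞, ∞]`. Convexity is expressed through the real
epigraph, which avoids arithmetic with `∞`. -/
structure IsClosedConvex (Q : E → EReal) : Prop where
  lsc : LowerSemicontinuous Q
  ne_bot : ∀ x, Q x ≠ ⊥
  convex_epigraph : Convex ℝ {p : E × ℝ | Q p.1 ≤ p.2}

namespace IsClosedConvex

variable {Q : E → EReal}

lemma le_combo (hQ : IsClosedConvex Q) {x y : E} {a b s t : ℝ} (hx : Q x ≤ a) (hy : Q y ≤ b)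
    (hs : 0 ≤ s) (ht : 0 ≤ t) (hst : s + t = 1) :
    Q (s • x + t • y) ≤ (s * a + t * b : ℝ) :=
  hQ.convex_epigraph (x := (x, a)) hx (y := (y, b)) hy hs ht hst

lemma measurable_expE [MeasurableSpace E] [BorelSpace E] (hQ : IsClosedConvex Q) :
    Measurable fun x => expE (Q x) :=
  expE_eq_exp ▸ EReal.measurable_exp.comp hQ.lsc.measurable

lemma convex_setOf_ne_top (hQ : IsClosedConvex Q) : Convex ℝ {x | Q x ≠ ⊤} := by
  have himage : {x | Q x ≠ ⊤} = LinearMap.fst ℝ E ℝ '' {p : E × ℝ | Q p.1 ≤ p.2} := by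
    ext x
    constructor
    · intro hx
      exact ⟨(x, (Q x).toReal), EReal.le_coe_toReal hx, rfl⟩
    · rintro ⟨p, hp, rfl⟩
      exact ne_top_of_le_ne_top (EReal.coe_ne_top _) hp
  exact himage ▸ hQ.convex_epigraph.linear_image _

lemma convexOn_toReal (hQ : IsClosedConvex Q) :
    ConvexOn ℝ {x | Q x ≠ ⊤} fun x => (Q x).toReal := by
  refine ⟨hQ.convex_setOf_ne_top, fun x hx y hy s t hs ht hst => ?_⟩
  exact EReal.toReal_le_toReal
    (hQ.le_combo (EReal.le_coe_toReal hx) (EReal.le_coe_toReal hy) hs ht hst)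
    (hQ.ne_bot _) (EReal.coe_ne_top _)

lemma exists_le_coe_of_isCompact [FiniteDimensional ℝ E] (hQ : IsClosedConvex Q) {K : Set E}
    (hK : IsCompact K) (hKQ : K ⊆ interior {x | Q x ≠ ⊤}) : ∃ C : ℝ, ∀ x ∈ K, Q x ≤ C := by
  obtain ⟨C, hC⟩ := hK.bddAbove_image (hQ.convexOn_toReal.continuousOn_interior.mono hKQ)
  refine ⟨C, fun x hx => (EReal.le_coe_toReal (interior_subset (hKQ hx))).trans ?_⟩
  exact EReal.coe_le_coe_iff.2 (hC ⟨x, hx, rfl⟩)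

lemma exists_coe_le_of_isCompact (hQ : IsClosedConvex Q) {K : Set E} (hK : IsCompact K)
    (hoff : ∀ x ∉ K, Q x = ⊤) : ∃ m : ℝ, ∀ x, m ≤ Q x := by
  rcases K.eq_empty_or_nonempty with rfl | hne
  · exact ⟨0, fun x => by simp [hoff x]⟩
  obtain ⟨x₀, -, hmin⟩ :=
    LowerSemicontinuousOn.exists_isMinOn hne hK (hQ.lsc.lowerSemicontinuousOn K)
  obtain ⟨m, -, hm⟩ := EReal.exists_between_coe_real (bot_lt_iff_ne_bot.2 (hQ.ne_bot x₀))
  refine ⟨m, fun x => ?_⟩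
  by_cases hx : x ∈ K
  · exact hm.le.trans (hmin hx)
  · simp [hoff x hx]

lemma interior_subset_interior_ne_top [FiniteDimensional ℝ E] [MeasurableSpace E] [BorelSpace E]
    (μ : Measure E) [μ.IsOpenPosMeasure] (hQ : IsClosedConvex Q) {P : Set E}
    (hae : ∀ᵐ x ∂μ.restrict P, Q x ≠ ⊤) : interior P ⊆ interior {x | Q x ≠ ⊤} := by
  refine (interior_maximal ?_ isOpen_interior).trans
    (convex_interior_closure_subset hQ.convex_setOf_ne_top)
  have hae' := (ae_restrict_iff' isOpen_interior.measurableSet).1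
    (ae_restrict_of_ae_restrict_of_subset interior_subset hae)
  refine ((Measure.dense_of_ae hae').open_subset_closure_inter isOpen_interior).trans
    (closure_mono fun x hx => hx.2 hx.1)

end IsClosedConvex

end ClosedConvex

section Extension

variable {n : ℕ} {P : Set (Euc n)} {q : Euc n → EReal}

lemma EConvexOn.le_combo (hq : EConvexOn P q) {x y : Euc n} (hxP : x ∈ P) (hyP : y ∈ P)
    {a b s t : ℝ} (hx : q x ≤ a) (hy : q y ≤ b) (hs : 0 ≤ s) (ht : 0 ≤ t) (hst : s + t = 1) :
    q (s • x + t • y) ≤ (s * a + t * b : ℝ) := by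
  obtain rfl : s = 1 - t := by linarith
  refine (hq hxP hyP ht (by linarith)).trans ?_
  rw [EReal.coe_add, EReal.coe_mul, EReal.coe_mul]
  exact add_le_add (mul_le_mul_of_nonneg_left hx (EReal.coe_nonneg.2 hs))
    (mul_le_mul_of_nonneg_left hy (EReal.coe_nonneg.2 ht))

lemma IsClosedConvex.eConvexOn {Q : Euc n → EReal} (hQ : IsClosedConvex Q) (P : Set (Euc n)) :
    EConvexOn P Q := by
  intro x _ y _ t ht0 ht1
  rcases ht0.eq_or_lt with rfl | ht0'
  · simp
  rcases ht1.eq_or_lt with rfl | ht1'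
  · simp
  have hs0' : 0 < 1 - t := sub_pos.2 ht1'
  have hbot : ∀ (r : ℝ) (z : Euc n), 0 < r → (r : EReal) * Q z ≠ ⊥ := fun r z hr => by
    simp [EReal.mul_eq_bot, hQ.ne_bot, hr.le, EReal.coe_ne_top, EReal.coe_ne_bot]
  by_cases hx : Q x = ⊤
  · rw [hx, EReal.coe_mul_top_of_pos hs0', EReal.top_add_of_ne_bot (hbot t y ht0')]
    exact le_top
  by_cases hy : Q y = ⊤
  · rw [hy, EReal.coe_mul_top_of_pos ht0', EReal.add_top_of_ne_bot (hbot _ x hs0')]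
    exact le_top
  refine (hQ.le_combo (EReal.le_coe_toReal hx) (EReal.le_coe_toReal hy) hs0'.le ht0
    (sub_add_cancel 1 t)).trans_eq ?_
  rw [EReal.coe_add, EReal.coe_mul, EReal.coe_mul, EReal.coe_toReal hx (hQ.ne_bot x),
    EReal.coe_toReal hy (hQ.ne_bot y)]

lemma exists_isClosedConvex_extension (hclosed : IsClosed P) (hconv : Convex ℝ P)
    (hlsc : LowerSemicontinuousOn q P) (hbot : ∀ x ∈ P, q x ≠ ⊥) (hq : EConvexOn P q) :
    ∃ Q, IsClosedConvex Q ∧ (∀ x ∉ P, Q x = ⊤) ∧ Set.EqOn Q q P := by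
  classical
  refine ⟨fun x => if x ∈ P then q x else ⊤, ⟨?_, ?_, ?_⟩, fun x hx => if_neg hx,
    fun x hx => if_pos hx⟩
  · intro x c (hc : c < if x ∈ P then q x else ⊤)
    change ∀ᶠ y in 𝓝 x, c < if y ∈ P then q y else ⊤
    by_cases hx : x ∈ P
    · rw [if_pos hx] at hc
      filter_upwards [eventually_nhdsWithin_iff.1 (hlsc x hx c hc)] with y hy
      split_ifs with hyP
      exacts [hy hyP, lt_top_of_lt hc]
    · rw [if_neg hx] at hc
      filter_upwards [hclosed.isOpen_compl.mem_nhds hx] with y hy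
      rwa [if_neg hy]
  · intro x
    by_cases hx : x ∈ P
    · simpa only [if_pos hx] using hbot x hx
    · simp only [if_neg hx, ne_eq, top_ne_bot, not_false_eq_true]
  · have hmem : ∀ p : Euc n × ℝ, (if p.1 ∈ P then q p.1 else ⊤) ≤ (p.2 : EReal) ↔
        p.1 ∈ P ∧ q p.1 ≤ p.2 := by
      intro p
      by_cases hp : p.1 ∈ P <;> simp [hp]
    intro p hp p' hp' s t hs ht hst
    rw [Set.mem_ofPred_eq, hmem] at hp hp' ⊢
    exact ⟨hconv hp.1 hp'.1 hs ht hst, hq.le_combo hp.1 hp'.1 hp.2 hp'.2 hs ht hst⟩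

end Extension

section RayRegularization

/-- The infimal convolution of `Q` with the penalty `t ↦ N * t` along the segment from `0` to
`-R • w`: it caps the rate of decay of `Q` in the direction `w` at `N`. -/
def rayInfConv {E : Type*} [AddCommGroup E] [Module ℝ E] (Q : E → EReal) (w : E) (R N : ℝ)
    (x : E) : EReal :=
  ⨅ t ∈ Set.Icc 0 R, Q (x + t • w) + ((N * t : ℝ) : EReal)

lemma rayInfConv_le {E : Type*} [AddCommGroup E] [Module ℝ E] (Q : E → EReal) {w : E} {R N t : ℝ}
    (ht : t ∈ Set.Icc 0 R) (x : E) :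
    rayInfConv Q w R N x ≤ Q (x + t • w) + ((N * t : ℝ) : EReal) :=
  iInf₂_le t ht

lemma rayInfConv_le_self {E : Type*} [AddCommGroup E] [Module ℝ E] (Q : E → EReal) (w : E)
    {R : ℝ} (hR : 0 ≤ R) (N : ℝ) : rayInfConv Q w R N ≤ Q := fun x => by
  simpa using rayInfConv_le Q (w := w) (N := N) (Set.left_mem_Icc.2 hR) x

lemma add_coe_le_coe_iff {a : EReal} {r c : ℝ} :
    a + (r : EReal) ≤ (c : EReal) ↔ a ≤ ((c - r : ℝ) : EReal) := by
  rw [EReal.coe_sub, EReal.le_sub_iff_add_le] <;> simp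

namespace IsClosedConvex

variable {E : Type*} [NormedAddCommGroup E] [NormedSpace ℝ E] {Q : E → EReal}
  {P : Set E} {w x : E} {R N : ℝ}

lemma lowerSemicontinuous_ray (hQ : IsClosedConvex Q) (w : E) (N : ℝ) :
    LowerSemicontinuous fun p : E × ℝ => Q (p.1 + p.2 • w) + ((N * p.2 : ℝ) : EReal) := by
  refine LowerSemicontinuous.add' (hQ.lsc.comp (g := fun p : E × ℝ => p.1 + p.2 • w) (by fun_prop))
    (continuous_coe_real_ereal.comp (by fun_prop)).lowerSemicontinuous fun p => ?_
  exact EReal.continuousAt_add (Or.inr (EReal.coe_ne_bot _)) (Or.inr (EReal.coe_ne_top _))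

lemma exists_rayInfConv_eq (hQ : IsClosedConvex Q) (hR : 0 ≤ R) (w : E) (N : ℝ) (x : E) :
    ∃ t ∈ Set.Icc 0 R, rayInfConv Q w R N x = Q (x + t • w) + ((N * t : ℝ) : EReal) := by
  obtain ⟨t, ht, hmin⟩ := LowerSemicontinuousOn.exists_isMinOn (Set.nonempty_Icc.2 hR) isCompact_Icc
    (((hQ.lowerSemicontinuous_ray w N).comp (g := fun t : ℝ => (x, t))
      (by fun_prop)).lowerSemicontinuousOn _)
  exact ⟨t, ht, le_antisymm (iInf₂_le t ht) (le_iInf₂ fun s hs => hmin hs)⟩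

protected lemma rayInfConv (hQ : IsClosedConvex Q) (hR : 0 ≤ R) (w : E) (N : ℝ) :
    IsClosedConvex (rayInfConv Q w R N) where
  lsc := by
    intro x c hc
    obtain ⟨c', hcc', hc'⟩ := exists_between hc
    filter_upwards [isCompact_Icc.eventually_forall_of_forall_eventually (x₀ := x)
      (K := Set.Icc 0 R) (P := fun x t => c' < Q (x + t • w) + ((N * t : ℝ) : EReal))
      fun t ht => hQ.lowerSemicontinuous_ray w N (x, t) c' (hc'.trans_le (iInf₂_le t ht))] with y hy
    exact hcc'.trans_le (le_iInf₂ fun t ht => (hy t ht).le)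
  ne_bot x := by
    obtain ⟨t, -, heq⟩ := hQ.exists_rayInfConv_eq hR w N x
    rw [heq, Ne, EReal.add_eq_bot_iff, not_or]
    exact ⟨hQ.ne_bot _, EReal.coe_ne_bot _⟩
  convex_epigraph := by
    intro p hp p' hp' a b ha hb hab
    obtain ⟨t, ht, heq⟩ := hQ.exists_rayInfConv_eq hR w N p.1
    obtain ⟨t', ht', heq'⟩ := hQ.exists_rayInfConv_eq hR w N p'.1
    rw [Set.mem_ofPred_eq, heq, add_coe_le_coe_iff] at hp
    rw [Set.mem_ofPred_eq, heq', add_coe_le_coe_iff] at hp'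
    refine (rayInfConv_le Q (convex_Icc 0 R ht ht' ha hb hab) _).trans ?_
    rw [add_coe_le_coe_iff]
    convert hQ.le_combo hp hp' ha hb hab using 2
    · simp only [Prod.fst_add, Prod.smul_fst, smul_eq_mul]
      module
    · simp only [Prod.snd_add, Prod.smul_snd, smul_eq_mul]
      ring

/-- Past the point where the minimum defining `rayInfConv` is attained, `Q` decays at rate more
than `N`; by convexity it decays at least as fast before `x`. -/
lemma add_le_of_rayInfConv_lt (hQ : IsClosedConvex Q) (hR : 0 ≤ R)
    (hlt : rayInfConv Q w R N x < Q x) {s : ℝ} (hs : 0 ≤ s) :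
    Q x + ((N * s : ℝ) : EReal) ≤ Q (x - s • w) := by
  obtain ⟨t, ht, heq⟩ := hQ.exists_rayInfConv_eq hR w N x
  rw [heq] at hlt
  have htop : Q (x + t • w) ≠ ⊤ := fun h => by
    rw [h, EReal.top_add_coe] at hlt
    exact not_top_lt hlt
  lift Q (x + t • w) to ℝ using ⟨htop, hQ.ne_bot _⟩ with a ha
  have hadd : a + N * t < Q x := by exact_mod_cast hlt
  have ht0 : 0 < t := by
    refine ht.1.lt_of_ne ?_
    rintro rfl
    simp [ha] at hadd
  refine EReal.le_of_forall_lt_iff_le.1 fun b hb => ?_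
  have hst : 0 < s + t := by linarith
  have hcombo := hQ.le_combo hb.le ha.ge (s := t / (s + t)) (t := s / (s + t)) (by positivity)
    (by positivity) (by field_simp; ring)
  have hx : (t / (s + t)) • (x - s • w) + (s / (s + t)) • (x + t • w) = x := by
    match_scalars <;> field_simp <;> ring
  rw [hx] at hcombo
  rw [add_coe_le_coe_iff]
  refine hcombo.trans (EReal.coe_le_coe_iff.2 ?_)
  have hreal : a + N * t < t / (s + t) * b + s / (s + t) * a := by
    exact_mod_cast hadd.trans_le hcombo
  have hNt : N * (s + t) < b - a := by
    field_simp at hreal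
    nlinarith
  field_simp
  nlinarith

lemma rayInfConv_sub_smul_le (hQ : IsClosedConvex Q) (hoff : ∀ y ∉ P, Q y = ⊤) (hR : 0 ≤ R)
    (hRP : ∀ y ∈ P, ∀ t, y + t • w ∈ P → t ≤ R) {s : ℝ} (hs : 0 ≤ s) (hxs : x - s • w ∈ P) :
    rayInfConv Q w R N (x - s • w) ≤
      rayInfConv Q w R N x + ((N * s : ℝ) : EReal) := by
  obtain ⟨t, ht, heq⟩ := hQ.exists_rayInfConv_eq hR w N x
  have hshift : x - s • w + (s + t) • w = x + t • w := by module
  by_cases hxt : x + t • w ∈ P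
  · refine (rayInfConv_le Q ⟨add_nonneg hs ht.1, hRP _ hxs _ (hshift ▸ hxt)⟩ _).trans_eq ?_
    rw [hshift, heq, add_assoc, ← EReal.coe_add]
    ring_nf
  · rw [heq, hoff _ hxt, EReal.top_add_coe, EReal.top_add_coe]
    exact le_top

lemma expE_sub_expE_rayInfConv_le (hQ : IsClosedConvex Q) (hoff : ∀ y ∉ P, Q y = ⊤) (hR : 0 ≤ R)
    (hRP : ∀ y ∈ P, ∀ t, y + t • w ∈ P → t ≤ R) (hN : 0 ≤ N) {s : ℝ} (hs : 0 ≤ s)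
    (hxs : x - s • w ∈ P) :
    expE (Q x) - expE (rayInfConv Q w R N x) ≤
      expE (Q (x - s • w)) - expE (rayInfConv Q w R N (x - s • w)) := by
  rcases (rayInfConv_le_self Q w hR N x).eq_or_lt with heq | hlt
  · rw [heq, tsub_self]
    exact zero_le
  · exact (expE_sub_le_expE_add_sub_expE_add _ _ (mul_nonneg hN hs)).trans <|
      tsub_le_tsub (expE_mono (hQ.add_le_of_rayInfConv_lt hR hlt hs))
        (expE_mono (hQ.rayInfConv_sub_smul_le hoff hR hRP hs hxs))

lemma le_rayInfConv_of_le (hQ : IsClosedConvex Q) (hR : 0 ≤ R) {m C η : ℝ} (hη : 0 ≤ η)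
    (hm : ∀ y, (m : EReal) ≤ Q y) (hC : Q (x - η • w) ≤ C) (hmC : C < m + N * η) :
    Q x ≤ rayInfConv Q w R N x := by
  by_contra! hlt
  have hle : ((m + N * η : ℝ) : EReal) ≤ C := by
    rw [EReal.coe_add]
    exact (add_le_add_left (hm x) _).trans ((hQ.add_le_of_rayInfConv_lt hR hlt hη).trans hC)
  exact hmC.not_ge (EReal.coe_le_coe_iff.1 hle)

end IsClosedConvex

end RayRegularization

section RaySlicing

lemma volume_inter_sub_notMem_le {A : Set ℝ} (hA : A.OrdConnected) {ℓ : ℝ} (hℓ : 0 ≤ ℓ) :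
    volume {s ∈ A | s - ℓ ∉ A} ≤ ENNReal.ofReal ℓ := by
  have hgap : ∀ s ∈ A, ∀ t ∈ A, t - ℓ ∉ A → t - s ≤ ℓ := by
    intro s hs t ht hnot
    by_contra! hlt
    exact hnot (hA.out hs ht ⟨by linarith, by linarith⟩)
  refine (Real.volume_le_diam _).trans (Metric.ediam_le fun s hs t ht => ?_)
  rw [edist_dist, Real.dist_eq]
  exact ENNReal.ofReal_le_ofReal
    (abs_sub_le_iff.2 ⟨hgap t ht.1 s hs.1 hs.2, hgap s hs.1 t ht.1 ht.2⟩)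

lemma lintegral_image_hausdorffMeasure_le {X Y : Type*} [EMetricSpace X] [MeasurableSpace X]
    [BorelSpace X] [EMetricSpace Y] [MeasurableSpace Y] [BorelSpace Y] {T : X → Y} {K : ℝ≥0}
    (hT : LipschitzWith K T) {d : ℝ} (hd : 0 ≤ d) (s : Set X) (f : Y → ℝ≥0∞) :
    ∫⁻ y in T '' s, f y ∂μH[d] ≤ (K : ℝ≥0∞) ^ d * ∫⁻ x in s, f (T x) ∂μH[d] := by
  have hmeas : Measurable T := hT.continuous.measurable
  have hle : (μH[d] : Measure Y).restrict (T '' s) ≤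
      (K : ℝ≥0∞) ^ d • Measure.map T ((μH[d] : Measure X).restrict s) := by
    refine Measure.le_iff.2 fun A hA => ?_
    rw [Measure.restrict_apply hA, Measure.smul_apply, Measure.map_apply hmeas hA,
      Measure.restrict_apply (hmeas hA), smul_eq_mul, Set.inter_comm A, ← Set.image_inter_preimage,
      Set.inter_comm s]
    exact hT.hausdorffMeasure_image_le hd _
  calc ∫⁻ y in T '' s, f y ∂μH[d]
      ≤ ∫⁻ y, f y ∂((K : ℝ≥0∞) ^ d • Measure.map T ((μH[d] : Measure X).restrict s)) :=
        lintegral_mono' hle le_rfl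
    _ ≤ (K : ℝ≥0∞) ^ d * ∫⁻ x in s, f (T x) ∂μH[d] := by
        rw [lintegral_smul_measure, smul_eq_mul]
        gcongr
        exact lintegral_map_le _ _

variable {E : Type*} [NormedAddCommGroup E] [NormedSpace ℝ E] {P : Set E} {w : E}

lemma ordConnected_line (hP : Convex ℝ P) (x w : E) : {t : ℝ | x + t • w ∈ P}.OrdConnected := by
  refine Convex.ordConnected (𝕜 := ℝ) fun s hs t ht a b ha hb hab => ?_
  have hcombo : x + (a • s + b • t) • w = a • (x + s • w) + b • (x + t • w) := by
    obtain rfl : a = 1 - b := by linarith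
    module
  change x + (a • s + b • t) • w ∈ P
  rw [hcombo]
  exact hP hs ht ha hb hab

/-- The points at which the lines directed by `w` enter `P`. -/
def entryBoundary (P : Set E) (w : E) : Set E :=
  {y ∈ P | ∀ s > (0 : ℝ), y - s • w ∉ P}

lemma entryBoundary_subset_frontier : entryBoundary P w ⊆ frontier P := by
  refine fun y hy => ⟨subset_closure hy.1, fun hint => ?_⟩
  have hcont : Continuous fun s : ℝ => y - s • w := by fun_prop
  have hev : ∀ᶠ s : ℝ in 𝓝[>] 0, y - s • w ∈ P := by
    refine hcont.continuousAt.eventually_mem ?_ |>.filter_mono nhdsWithin_le_nhds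
    simpa using mem_interior_iff_mem_nhds.1 hint
  obtain ⟨s, hsP, hs⟩ := (hev.and self_mem_nhdsWithin).exists
  exact hy.2 s hs hsP

lemma measurableSet_entryBoundary [MeasurableSpace E] [BorelSpace E] (hclosed : IsClosed P)
    (hconv : Convex ℝ P) : MeasurableSet (entryBoundary P w) := by
  have heq : entryBoundary P w =
      P \ ⋃ k : ℕ, (fun y => y - (1 / ((k : ℝ) + 1)) • w) ⁻¹' P := by
    ext y
    simp only [entryBoundary, Set.mem_ofPred_eq, Set.mem_sdiff, Set.mem_iUnion, Set.mem_preimage,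
      not_exists, and_congr_right_iff]
    refine fun hy => ⟨fun h k => h _ Nat.one_div_pos_of_nat, fun h s hs hsP => ?_⟩
    obtain ⟨k, hk⟩ := exists_nat_one_div_lt hs
    have hmem := (ordConnected_line hconv y w).out (x := -s) (y := 0)
      (by simpa [← sub_eq_add_neg] using hsP) (by simpa using hy)
      (show -(1 / ((k : ℝ) + 1)) ∈ _ from ⟨neg_le_neg hk.le, neg_nonpos.2 (by positivity)⟩)
    exact h k (by simpa [← sub_eq_add_neg] using hmem)
  rw [heq]
  exact hclosed.measurableSet.diff
    (.iUnion fun k => (hclosed.preimage (by fun_prop)).measurableSet)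

lemma exists_chord_le (hP : Bornology.IsBounded P) (hw : w ≠ 0) :
    ∃ R : ℝ, 0 ≤ R ∧ ∀ x ∈ P, ∀ t : ℝ, x + t • w ∈ P → t ≤ R := by
  refine ⟨Metric.diam P / ‖w‖, by positivity, fun x hx t ht => ?_⟩
  rw [le_div_iff₀ (norm_pos_iff.2 hw)]
  calc t * ‖w‖ ≤ |t| * ‖w‖ := by gcongr; exact le_abs_self t
    _ = dist (x + t • w) x := by simp [norm_smul]
    _ ≤ Metric.diam P := Metric.dist_le_diam_of_mem hP ht hx

lemma exists_sub_smul_mem_entryBoundary (hP : IsCompact P) (hw : w ≠ 0) {x : E} (hx : x ∈ P) :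
    ∃ s : ℝ, 0 ≤ s ∧ x - s • w ∈ entryBoundary P w := by
  obtain ⟨R, hR, hchord⟩ := exists_chord_le hP.isBounded (neg_ne_zero.2 hw)
  have hcompact : IsCompact (Set.Icc 0 R ∩ (fun s : ℝ => x - s • w) ⁻¹' P) :=
    isCompact_Icc.inter_right (hP.isClosed.preimage (by fun_prop))
  obtain ⟨s, ⟨hs, hsP⟩, hmax⟩ := hcompact.exists_isMaxOn ⟨0, by simpa [hR] using hx⟩ continuousOn_id
  refine ⟨s, hs.1, hsP, fun r hr hrP => ?_⟩
  have hsum : x - s • w - r • w = x - (s + r) • w := by module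
  rw [hsum] at hrP
  have hle : s + r ≤ s := hmax
    ⟨⟨by linarith [hs.1], hchord x hx _ (by rwa [smul_neg, ← sub_eq_add_neg])⟩, hrP⟩
  linarith

lemma indicator_le_of_mem_entryBoundary {h : E → ℝ≥0∞}
    (hmono : ∀ x ∈ P, ∀ s : ℝ, 0 ≤ s → x - s • w ∈ P → h x ≤ h (x - s • w)) {x : E}
    (hx : x ∈ entryBoundary P w) (t : ℝ) : P.indicator h (x + t • w) ≤ h x := by
  by_cases ht : x + t • w ∈ P
  · rw [Set.indicator_of_mem ht]
    rcases le_or_gt 0 t with hnonneg | hneg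
    · simpa [hx.1] using hmono _ ht t hnonneg
    · exact (hx.2 (-t) (neg_pos.2 hneg) (by simpa using ht)).elim
  · rw [Set.indicator_of_notMem ht]
    exact zero_le

lemma exists_lineCoordinates (hw : w ≠ 0) :
    ∃ (F : Submodule ℝ E) (e : (F × ℝ) ≃L[ℝ] E), ∀ y t, e (y, t) = y + t • w := by
  obtain ⟨f, hf⟩ := SeparatingDual.exists_eq_one (R := ℝ) hw
  have hinv : Function.RightInverse (ContinuousLinearMap.toSpanSingleton ℝ w) f := fun t => by
    simp [hf]
  refine ⟨f.ker, ((ContinuousLinearEquiv.equivOfRightInverse f _ hinv).trans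
    (ContinuousLinearEquiv.prodComm ℝ ℝ f.ker)).symm, fun y t => ?_⟩
  simp [add_comm]

variable [MeasurableSpace E] [BorelSpace E] {F : Submodule ℝ E} {e : (F × ℝ) ≃L[ℝ] E}

/-- On each line directed by `w`, the function `h` is at most its supremum and vanishes outside a
set of length at most `ℓ`. -/
lemma lintegral_map_prod_le (he : ∀ y t, e (y, t) = y + t • w) (ν : Measure F) [SFinite ν]
    (hclosed : IsClosed P) (hconv : Convex ℝ P) {ℓ : ℝ} (hℓ : 0 ≤ ℓ) {h : E → ℝ≥0∞}
    (hzero : ∀ x ∈ P, x - ℓ • w ∈ P → h x = 0) :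
    ∫⁻ x in P, h x ∂(ν.prod volume).map e ≤
      ENNReal.ofReal ℓ * ∫⁻ y : F, ⨆ t : ℝ, P.indicator h (y + t • w) ∂ν := by
  rw [← lintegral_indicator hclosed.measurableSet, ← lintegral_const_mul' _ _ ENNReal.ofReal_ne_top]
  refine (lintegral_map_le _ _).trans ((lintegral_prod_le _).trans (lintegral_mono fun y => ?_))
  set A : Set ℝ := {t | (y : E) + t • w ∈ P}
  set M := ⨆ t : ℝ, P.indicator h (y + t • w)
  have hpointwise : ∀ t,
      P.indicator h (e (y, t)) ≤ {t ∈ A | t - ℓ ∉ A}.indicator (fun _ => M) t := by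
    intro t
    rw [he]
    by_cases ht : t ∈ {t ∈ A | t - ℓ ∉ A}
    · rw [Set.indicator_of_mem ht]
      exact le_iSup (fun t : ℝ => P.indicator h (y + t • w)) t
    · refine (le_of_eq ?_).trans zero_le
      refine Set.indicator_apply_eq_zero.2 fun htP => hzero _ htP ?_
      by_contra hnot
      refine ht ⟨htP, fun hmem => hnot ?_⟩
      convert show (y : E) + (t - ℓ) • w ∈ P from hmem using 1
      module
  calc ∫⁻ t, P.indicator h (e (y, t))
      ≤ M * volume {t ∈ A | t - ℓ ∉ A} :=
        (lintegral_mono hpointwise).trans (lintegral_indicator_const_le _ _)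
    _ ≤ M * ENNReal.ofReal ℓ := by
        gcongr
        exact volume_inter_sub_notMem_le (ordConnected_line hconv _ _) hℓ
    _ = ENNReal.ofReal ℓ * M := mul_comm _ _

/-- A function decreasing along `w` attains its supremum on a line at the entry point, and the
projection along `w` is Lipschitz. -/
lemma exists_lintegral_iSup_line_le (he : ∀ y t, e (y, t) = y + t • w)
    (hP : IsCompact P) (hconv : Convex ℝ P) (hw : w ≠ 0) {d : ℝ} (hd : 0 ≤ d) :
    ∃ C : ℝ≥0∞, C ≠ ⊤ ∧ ∀ h : E → ℝ≥0∞,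
      (∀ x ∈ P, ∀ s : ℝ, 0 ≤ s → x - s • w ∈ P → h x ≤ h (x - s • w)) →
      ∫⁻ y : F, ⨆ t : ℝ, P.indicator h (y + t • w) ∂μH[d] ≤
        C * ∫⁻ x in frontier P, h x ∂μH[d] := by
  set T : E →L[ℝ] F := (ContinuousLinearMap.fst ℝ F ℝ).comp (e.symm : E →L[ℝ] F × ℝ)
  have hT : ∀ (y : F) (t : ℝ), T (y + t • w) = y := fun y t => by simp [T, ← he]
  have hTself : ∀ x, ∃ t : ℝ, x = T x + t • w := fun x => ⟨(e.symm x).2, by simp [T, ← he]⟩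
  refine ⟨(‖T‖₊ : ℝ≥0∞) ^ d, by finiteness, fun h hmono => ?_⟩
  set k : F → ℝ≥0∞ := fun y => ⨆ t : ℝ, P.indicator h (y + t • w)
  have hsupport : ∀ y ∉ T '' entryBoundary P w, k y = 0 := by
    intro y hy
    simp only [k, ENNReal.iSup_eq_zero, Set.indicator_apply_eq_zero]
    intro t ht
    obtain ⟨s, -, hs⟩ := exists_sub_smul_mem_entryBoundary hP hw ht
    refine (hy ⟨_, hs, ?_⟩).elim
    rw [add_sub_assoc, ← sub_smul, hT]
  have hentry : ∀ x ∈ entryBoundary P w, k (T x) ≤ h x := by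
    intro x hx
    obtain ⟨s, hs⟩ := hTself x
    refine iSup_le fun t => ?_
    have hshift : (T x : E) + t • w = x + (t - s) • w := by
      conv_rhs => rw [hs]
      module
    rw [hshift]
    exact indicator_le_of_mem_entryBoundary hmono hx _
  calc ∫⁻ y, k y ∂μH[d] = ∫⁻ y in T '' entryBoundary P w, k y ∂μH[d] := by
        refine (setLIntegral_eq_of_support_subset fun y hy => ?_).symm
        exact not_imp_comm.1 (hsupport y) hy
    _ ≤ (‖T‖₊ : ℝ≥0∞) ^ d * ∫⁻ x in entryBoundary P w, k (T x) ∂μH[d] :=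
        lintegral_image_hausdorffMeasure_le T.lipschitz hd _ _
    _ ≤ (‖T‖₊ : ℝ≥0∞) ^ d * ∫⁻ x in frontier P, h x ∂μH[d] := by
        gcongr 1
        exact (setLIntegral_mono' (measurableSet_entryBoundary hP.isClosed hconv) hentry).trans
          (lintegral_mono_set entryBoundary_subset_frontier)

/-- All the mass of `h` lies in a collar of width `ℓ` along the entry boundary, where `h` is
controlled by its boundary values. -/
lemma exists_setLIntegral_le_frontier [FiniteDimensional ℝ E] (μ : Measure E) [μ.IsAddHaarMeasure]
    (hP : IsCompact P) (hconv : Convex ℝ P) (hw : w ≠ 0) :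
    ∃ C : ℝ≥0∞, C ≠ ⊤ ∧ ∀ (ℓ : ℝ) (h : E → ℝ≥0∞), 0 ≤ ℓ →
      (∀ x ∈ P, ∀ s : ℝ, 0 ≤ s → x - s • w ∈ P → h x ≤ h (x - s • w)) →
      (∀ x ∈ P, x - ℓ • w ∈ P → h x = 0) →
      ∫⁻ x in P, h x ∂μ ≤
        C * ENNReal.ofReal ℓ * ∫⁻ x in frontier P, h x ∂μH[(finrank ℝ E : ℝ) - 1] := by
  obtain ⟨F, e, he⟩ := exists_lineCoordinates hw
  have hdim : (finrank ℝ E : ℝ) - 1 = finrank ℝ F := by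
    simp [← e.toLinearEquiv.finrank_eq]
  obtain ⟨C, hC, hboundary⟩ :=
    exists_lintegral_iSup_line_le he hP hconv hw (d := finrank ℝ F) (Nat.cast_nonneg _)
  have := e.isAddHaarMeasure_map ((μH[finrank ℝ F] : Measure F).prod volume)
  obtain ⟨c, hμ⟩ : ∃ c : ℝ≥0, μ = c • ((μH[finrank ℝ F] : Measure F).prod volume).map e :=
    ⟨_, Measure.isAddLeftInvariant_eq_smul _ _⟩
  refine ⟨c * C, by finiteness, fun ℓ h hℓ hmono hzero => ?_⟩
  calc ∫⁻ x in P, h x ∂μ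
      = c * ∫⁻ x in P, h x ∂((μH[finrank ℝ F] : Measure F).prod volume).map e := by
        rw [hμ, Measure.restrict_smul, lintegral_smul_measure, ENNReal.smul_def, smul_eq_mul]
    _ ≤ c * (ENNReal.ofReal ℓ * (C * ∫⁻ x in frontier P, h x ∂μH[finrank ℝ F])) := by
        gcongr
        refine (lintegral_map_prod_le he _ hP.isClosed hconv hℓ hzero).trans ?_
        gcongr
        exact hboundary h hmono
    _ = c * C * ENNReal.ofReal ℓ * ∫⁻ x in frontier P, h x ∂μH[(finrank ℝ E : ℝ) - 1] := by
        rw [hdim]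
        ring

end RaySlicing

section HalfSpaces

variable {E : Type*} [NormedAddCommGroup E] [NormedSpace ℝ E] {ι : Type*}

lemma convex_iInter_setOf_nonneg (L : ι → E →ᵃ[ℝ] ℝ) : Convex ℝ (⋂ k, {x | 0 ≤ L k x}) :=
  convex_iInter fun k => (convex_Ici (0 : ℝ)).affine_preimage (L k)

lemma vectorSpan_setOf_eq_zero_le_ker (ℓ : E →ᵃ[ℝ] ℝ) (P : Set E) :
    vectorSpan ℝ {y ∈ P | ℓ y = 0} ≤ ℓ.linear.ker := by
  rw [vectorSpan_def, Submodule.span_le]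
  rintro _ ⟨x, hx, y, hy, rfl⟩
  change ℓ.linear (x -ᵥ y) = 0
  rw [ℓ.linearMap_vsub, hx.2, hy.2, vsub_self]

variable [FiniteDimensional ℝ E]

lemma interior_setOf_affineMap_nonneg {ℓ : E →ᵃ[ℝ] ℝ} (hℓ : ℓ ≠ 0) :
    interior {x | 0 ≤ ℓ x} = {x | 0 < ℓ x} := by
  by_cases hlin : ℓ.linear = 0
  · obtain ⟨c, rfl⟩ := ℓ.linear_eq_zero_iff_exists_const.1 hlin
    have hc : c ≠ 0 := by
      rintro rfl
      exact hℓ rfl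
    rcases hc.lt_or_gt with hneg | hpos
    · simp [hneg.not_ge, hneg.not_gt]
    · simp [hpos, hpos.le]
  · have hopen : IsOpenMap ℓ := AffineMap.isOpenMap_linear_iff.1 <|
      ℓ.linear.isOpenMap_of_finiteDimensional (LinearMap.surjective hlin)
    change interior (ℓ ⁻¹' Set.Ici 0) = ℓ ⁻¹' Set.Ioi 0
    rw [← hopen.preimage_interior_eq_interior_preimage ℓ.continuous_of_finiteDimensional,
      interior_Ici]

lemma interior_iInter_setOf_nonneg [Finite ι] {L : ι → E →ᵃ[ℝ] ℝ} (hL : ∀ k, L k ≠ 0) :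
    interior (⋂ k, {x | 0 ≤ L k x}) = ⋂ k, {x | 0 < L k x} := by
  rw [interior_iInter_of_finite]
  exact Set.iInter_congr fun k => interior_setOf_affineMap_nonneg (hL k)

lemma exists_mem_forall_mem_imp_eq_top [Countable ι] (s : ι → AffineSubspace ℝ E) {U : Set E}
    (hU : IsOpen U) (hne : U.Nonempty) : ∃ x ∈ U, ∀ i, x ∈ s i → s i = ⊤ := by
  borelize E
  have hae : ∀ᵐ x ∂(Measure.addHaar : Measure E), ∀ i, x ∈ s i → s i = ⊤ := by
    refine ae_all_iff.2 fun i => ?_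
    by_cases hi : s i = ⊤
    · exact .of_forall fun _ _ => hi
    · exact measure_mono_null (fun x hx => (Classical.not_imp.1 hx).1)
        (Measure.addHaar_affineSubspace Measure.addHaar (s i) hi)
  exact (Measure.dense_of_ae hae).exists_mem_open hU hne |>.imp fun _ h => h.symm

/-- For `w` outside the proper hyperplanes parallel to the faces, a function `L k` cannot vanish
identically on a segment directed by `w`. -/
lemma mem_interior_of_add_smul_mem_of_sub_smul_mem [Finite ι] {L : ι → E →ᵃ[ℝ] ℝ}
    (hL : ∀ k, L k ≠ 0) {w x : E} (hw : ∀ k, (L k).linear w = 0 → (L k).linear = 0) {η : ℝ}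
    (hη : η ≠ 0) (hadd : x + η • w ∈ ⋂ k, {x | 0 ≤ L k x})
    (hsub : x - η • w ∈ ⋂ k, {x | 0 ≤ L k x}) : x ∈ interior (⋂ k, {x | 0 ≤ L k x}) := by
  rw [interior_iInter_setOf_nonneg hL]
  refine Set.mem_iInter.2 fun k => ?_
  change 0 < L k x
  refine lt_of_not_ge fun hle => hL k ?_
  have hvadd : ∀ v, L k (x + v) = (L k).linear v + L k x := fun v => by
    rw [add_comm, ← vadd_eq_add, (L k).map_vadd, vadd_eq_add]
  have hadd' : 0 ≤ L k (x + η • w) := Set.mem_iInter.1 hadd k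
  have hsub' : 0 ≤ L k (x - η • w) := Set.mem_iInter.1 hsub k
  rw [sub_eq_add_neg, hvadd, map_neg] at hsub'
  rw [hvadd] at hadd'
  have hw0 : (L k).linear (η • w) = 0 := by linarith [hle]
  have hlin : (L k).linear = 0 := hw k (by simpa [hη] using hw0)
  ext y
  have hy := hvadd (y - x)
  rw [add_sub_cancel, hlin] at hy
  simp only [LinearMap.zero_apply, zero_add] at hy
  change L k y = 0
  linarith [hle]

lemma hausdorffMeasure_lt_top_of_isBounded [MeasurableSpace E] [BorelSpace E] {s : Set E}
    (hs : Bornology.IsBounded s) : μH[finrank ℝ (vectorSpan ℝ s)] s < ⊤ := by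
  rcases s.eq_empty_or_nonempty with rfl | ⟨p, hp⟩
  · simp
  set T : vectorSpan ℝ s → E := fun v => v + p
  have hT : Isometry T := Isometry.of_dist_eq fun v v' => by simp [T, Subtype.dist_eq]
  have hrange : s ⊆ Set.range T := fun x hx =>
    ⟨⟨x - p, vsub_mem_vectorSpan ℝ hx hp⟩, sub_add_cancel x p⟩
  have hbounded : Bornology.IsBounded (T ⁻¹' s) := hT.antilipschitz.isBounded_preimage hs
  calc μH[finrank ℝ (vectorSpan ℝ s)] s
      ≤ μH[finrank ℝ (vectorSpan ℝ s)] (T '' (T ⁻¹' s)) := by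
        rw [Set.image_preimage_eq_of_subset hrange]
    _ = μH[finrank ℝ (vectorSpan ℝ s)] (T ⁻¹' s) :=
        hT.hausdorffMeasure_image (Or.inl (Nat.cast_nonneg _)) _
    _ < ⊤ := hbounded.measure_lt_top

lemma inter_frontier_nonempty_of_isPreconnected {X : Type*} [TopologicalSpace X]
    {s P : Set X} (hs : IsPreconnected s) (hP : IsClosed P) (hint : (s ∩ interior P).Nonempty)
    (hcompl : (s ∩ Pᶜ).Nonempty) : (s ∩ frontier P).Nonempty := by
  by_contra hempty
  have hcover : s ⊆ interior P ∪ Pᶜ := fun x hx => by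
    by_contra! hnot
    simp only [Set.mem_union, Set.mem_compl_iff, not_or, not_not] at hnot
    exact hempty ⟨x, hx, subset_closure hnot.2, hnot.1⟩
  obtain ⟨x, -, hxint, hxcompl⟩ := hs _ _ isOpen_interior hP.isOpen_compl hcover hint hcompl
  exact hxcompl (interior_subset hxint)

end HalfSpaces

section Polytopes

variable {n : ℕ} {P : Set (Euc n)}

/-- The direction `w` is transverse to the boundary of `P`: a segment in `P` directed by `w` has its
midpoint in the interior of `P`. -/
def IsTransverse {E : Type*} [TopologicalSpace E] [AddCommGroup E] [Module ℝ E] (P : Set E)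
    (w : E) : Prop :=
  ∀ (x : E) (η : ℝ), η ≠ 0 → x + η • w ∈ P → x - η • w ∈ P → x ∈ interior P

lemma IsPolytope.convex (hP : IsPolytope P) : Convex ℝ P := by
  obtain ⟨-, -, m, L, -, rfl⟩ := hP
  exact convex_iInter_setOf_nonneg L

lemma IsPolytope.exists_transverse (hP : IsPolytope P) (v : Euc n) :
    ∃ w, v + w ∈ interior P ∧ IsTransverse P w := by
  obtain ⟨-, ⟨p, hp⟩, m, L, hL, rfl⟩ := hP
  obtain ⟨w, hvw, hw⟩ := exists_mem_forall_mem_imp_eq_top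
    (fun k => (L k).linear.ker.toAffineSubspace)
    (isOpen_interior.preimage (by fun_prop : Continuous fun w => v + w))
    ⟨p - v, by simpa only [Set.mem_preimage, add_sub_cancel] using hp⟩
  refine ⟨w, hvw, fun x η hη => mem_interior_of_add_smul_mem_of_sub_smul_mem hL ?_ hη⟩
  intro k hk
  have htop := congrArg AffineSubspace.direction (hw k hk)
  rwa [Submodule.toAffineSubspace_direction, AffineSubspace.direction_top,
    LinearMap.ker_eq_top] at htop

/-- A point of a polytope sees the polytope locally as a cone. -/
lemma IsPolytope.eventually_lineMap_mem (hP : IsPolytope P) {x₀ : Euc n} (hx₀ : x₀ ∈ P) {c : ℝ}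
    (hc : 0 ≤ c) : ∀ᶠ x in 𝓝[P] x₀, AffineMap.lineMap x₀ x c ∈ P := by
  obtain ⟨-, -, m, L, -, rfl⟩ := hP
  simp only [Set.mem_iInter, Set.mem_ofPred_eq, AffineMap.apply_lineMap] at hx₀ ⊢
  refine Filter.eventually_all.2 fun k => ?_
  rcases (hx₀ k).eq_or_lt with hzero | hpos
  · filter_upwards [self_mem_nhdsWithin] with x hx
    rw [← hzero, AffineMap.lineMap_apply_module, smul_zero, zero_add]
    exact mul_nonneg hc (Set.mem_iInter.1 hx k)
  · have hcont : Continuous fun x => AffineMap.lineMap (L k x₀) (L k x) c := by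
      have := (L k).continuous_of_finiteDimensional
      simp only [AffineMap.lineMap_apply_module]
      fun_prop
    have hev : ∀ᶠ x in 𝓝 x₀, 0 < AffineMap.lineMap (L k x₀) (L k x) c :=
      hcont.continuousAt.eventually_const_lt (by simpa using hpos)
    exact (hev.filter_mono nhdsWithin_le_nhds).mono fun _ h => h.le

/-- The Gale–Klee–Rockafellar theorem. -/
lemma IsPolytope.continuousOn_of_eConvexOn (hP : IsPolytope P) {q : Euc n → EReal}
    (hq : EConvexOn P q) (hlsc : LowerSemicontinuousOn q P) {M : ℝ}
    (hM : ∀ x ∈ P, q x ≤ M) : ContinuousOn q P := by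
  intro x₀ hx₀
  refine continuousWithinAt_iff_lower_upperSemicontinuousWithinAt.2 ⟨hlsc x₀ hx₀, ?_⟩
  intro c (hc : q x₀ < c)
  obtain ⟨a, ha, hac⟩ := EReal.exists_between_coe_real hc
  obtain ⟨b, hab, hbc⟩ := EReal.exists_between_coe_real hac
  have hcont : Continuous fun θ : ℝ => (1 - θ) * a + θ * M := by fun_prop
  have hsmall : ∀ᶠ θ in 𝓝[>] (0 : ℝ), (1 - θ) * a + θ * M < b ∧ θ < 1 ∧ 0 < θ :=
    (hcont.continuousAt.eventually_lt continuousAt_const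
      (by simpa using EReal.coe_lt_coe_iff.1 hab)).filter_mono nhdsWithin_le_nhds |>.and
      ((eventually_nhdsWithin_of_eventually_nhds (gt_mem_nhds one_pos)).and self_mem_nhdsWithin)
  obtain ⟨θ, hθ, hθ1, hθ0⟩ := hsmall.exists
  filter_upwards [hP.eventually_lineMap_mem hx₀ (inv_nonneg.2 hθ0.le)] with x hx
  have hcombo : (1 - θ) • x₀ + θ • AffineMap.lineMap x₀ x θ⁻¹ = x := by
    rw [← AffineMap.lineMap_apply_module, AffineMap.lineMap_lineMap_right,
      mul_inv_cancel₀ hθ0.ne', AffineMap.lineMap_apply_one]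
  calc q x = q ((1 - θ) • x₀ + θ • AffineMap.lineMap x₀ x θ⁻¹) := by rw [hcombo]
    _ ≤ ((1 - θ) * a + θ * M : ℝ) :=
        hq.le_combo hx₀ hx ha.le (hM _ hx) (by linarith) hθ0.le (by ring)
    _ < b := EReal.coe_lt_coe_iff.2 hθ
    _ < c := hbc

lemma isFacetOf_of_affineSpan_insert_eq_top {ℓ : Euc n →ᵃ[ℝ] ℝ} (hℓ : ℓ ≠ 0)
    (hnonneg : ∀ y ∈ P, 0 ≤ ℓ y) (hne : {y ∈ P | ℓ y = 0}.Nonempty) {p : Euc n}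
    (htop : affineSpan ℝ (insert p {y ∈ P | ℓ y = 0}) = ⊤) : IsFacetOf P {y ∈ P | ℓ y = 0} := by
  refine ⟨⟨ℓ, hℓ, hnonneg, rfl⟩, le_antisymm ?_ ?_⟩
  · have hlin : ℓ.linear ≠ 0 := by
      intro hlin
      obtain ⟨c, rfl⟩ := ℓ.linear_eq_zero_iff_exists_const.1 hlin
      obtain ⟨y, -, hy⟩ := hne
      exact hℓ (by rw [show c = 0 from hy]; rfl)
    have hker : finrank ℝ ℓ.linear.ker < finrank ℝ (Euc n) :=
      Submodule.finrank_lt (LinearMap.ker_eq_top.not.2 hlin)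
    rw [finrank_euclideanSpace_fin] at hker
    exact (Submodule.finrank_mono (vectorSpan_setOf_eq_zero_le_ker ℓ P)).trans_lt hker
  · rw [AffineSubspace.affineSpan_eq_top_iff_vectorSpan_eq_top_of_nonempty _ _ _
      (Set.insert_nonempty _ _)] at htop
    have hle := finrank_vectorSpan_insert_le_set ℝ {y ∈ P | ℓ y = 0} p
    rwa [htop, finrank_top, finrank_euclideanSpace_fin] at hle

/-- A segment in `V` from an interior point `p` to a generic point outside `P` leaves `P` through a
face which, together with `p`, spans the whole space: a facet. -/
lemma exists_isFacetOf_inter_nonempty {m : ℕ} {L : Fin m → (Euc n →ᵃ[ℝ] ℝ)} (hL : ∀ k, L k ≠ 0)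
    (hP : P = ⋂ k, {x | 0 ≤ L k x}) {V : Set (Euc n)} (hVopen : IsOpen V) (hVconv : Convex ℝ V)
    (hint : (V ∩ interior P).Nonempty) (hout : (V ∩ Pᶜ).Nonempty) :
    ∃ k, IsFacetOf P {y ∈ P | L k y = 0} ∧ (V ∩ {y ∈ P | L k y = 0}).Nonempty := by
  have hmemP : ∀ x, x ∈ P ↔ ∀ k, 0 ≤ L k x := fun x => by simp [hP]
  have hmem_int : ∀ x, x ∈ interior P ↔ ∀ k, 0 < L k x := fun x => by
    simp [hP, interior_iInter_setOf_nonneg hL]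
  have hclosed : IsClosed P := hP ▸ isClosed_iInter fun k =>
    isClosed_le continuous_const (L k).continuous_of_finiteDimensional
  obtain ⟨p, hpV, hp⟩ := hint
  obtain ⟨z, ⟨hzV, hzP⟩, hz⟩ := exists_mem_forall_mem_imp_eq_top
    (fun k => affineSpan ℝ (insert p {y ∈ P | L k y = 0}))
    (hVopen.inter hclosed.isOpen_compl) hout
  obtain ⟨c, hcseg, hc⟩ := inter_frontier_nonempty_of_isPreconnected
    (convex_segment p z).isPreconnected hclosed
    ⟨p, left_mem_segment ℝ p z, hp⟩ ⟨z, right_mem_segment ℝ p z, hzP⟩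
  have hcP : c ∈ P := hclosed.frontier_subset hc
  obtain ⟨k, hk⟩ : ∃ k, L k c = 0 := by
    by_contra! hne
    exact hc.2 ((hmem_int c).2 fun k => ((hmemP c).1 hcP k).lt_of_ne (hne k).symm)
  obtain ⟨t, -, rfl⟩ := segment_eq_image_lineMap ℝ p z ▸ hcseg
  have ht : t ≠ 0 := by
    rintro rfl
    rw [AffineMap.lineMap_apply_zero] at hk
    exact ((hmem_int p).1 hp k).ne' hk
  have hzspan : z ∈ affineSpan ℝ (insert p {y ∈ P | L k y = 0}) := by
    have hsubset := subset_affineSpan ℝ (insert p {y ∈ P | L k y = 0})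
    have hline := AffineMap.lineMap_mem t⁻¹ (hsubset (Set.mem_insert p _))
      (hsubset (Set.mem_insert_of_mem p ⟨hcP, hk⟩))
    rwa [AffineMap.lineMap_lineMap_right, inv_mul_cancel₀ ht, AffineMap.lineMap_apply_one] at hline
  exact ⟨k, isFacetOf_of_affineSpan_insert_eq_top (hL k) (fun y hy => (hmemP y).1 hy k)
    ⟨_, hcP, hk⟩ (hz k hzspan), _, hVconv.segment_subset hpV hzV hcseg, hcP, hk⟩

lemma IsPolytope.exists_facets_cover (hP : IsPolytope P) :
    ∃ (ι : Type) (_ : Fintype ι) (F : ι → Set (Euc n)),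
      (∀ i, IsFacetOf P (F i)) ∧ frontier P ⊆ ⋃ i, F i := by
  classical
  obtain ⟨hcompact, hint, m, L, hL, hPL⟩ := id hP
  set F : {k // IsFacetOf P {y ∈ P | L k y = 0}} → Set (Euc n) := fun k => {y ∈ P | L k y = 0}
  refine ⟨_, inferInstance, F, fun k => k.2, fun x hx => ?_⟩
  by_contra hnot
  have hclosed : IsClosed (⋃ k, F k) := isClosed_iUnion_of_finite fun k =>
    hcompact.isClosed.inter (isClosed_eq (L k).continuous_of_finiteDimensional continuous_const)
  obtain ⟨r, hr, hball⟩ := Metric.isOpen_iff.1 hclosed.isOpen_compl x hnot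
  have hx' := frontier_eq_closure_inter_closure.subset hx
  rw [← hP.convex.closure_interior_eq_closure_of_nonempty_interior hint] at hx'
  obtain ⟨k, hk, y, hyball, hy⟩ := exists_isFacetOf_inter_nonempty hL hPL Metric.isOpen_ball
    (convex_ball x r) (mem_closure_iff.1 hx'.1 _ Metric.isOpen_ball (Metric.mem_ball_self hr))
    (mem_closure_iff.1 hx'.2 _ Metric.isOpen_ball (Metric.mem_ball_self hr))
  exact hball hyball (Set.mem_iUnion.2 ⟨⟨k, hk⟩, hy⟩)

lemma IsFacetOf.hausdorffMeasure_lt_top {F : Set (Euc n)} (hF : IsFacetOf P F)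
    (hP : Bornology.IsBounded P) : μH[(n : ℝ) - 1] F < ⊤ := by
  obtain ⟨⟨ℓ, -, -, rfl⟩, hdim⟩ := hF
  have hdim' : (n : ℝ) - 1 = finrank ℝ (vectorSpan ℝ {y ∈ P | ℓ y = 0}) := by
    simp [← hdim]
  exact hdim' ▸ hausdorffMeasure_lt_top_of_isBounded (hP.subset (Set.sep_subset _ _))

end Polytopes

section Systems

namespace NSystem

variable {n : ℕ} (S : NSystem n)

lemma measurableSet_P : MeasurableSet S.P :=
  S.simple.1.1.measurableSet

lemma frontier_subset : frontier S.P ⊆ S.P :=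
  S.simple.1.1.isClosed.frontier_subset

lemma exists_μ_eq_smul : ∃ c : ℝ≥0∞, c ≠ 0 ∧ c ≠ ⊤ ∧ S.μ = c • volume.restrict S.P := by
  obtain ⟨c, hc, hμ⟩ := S.flat
  exact ⟨_, (ENNReal.ofReal_pos.2 hc).ne', ENNReal.ofReal_ne_top, hμ⟩

lemma μ_restrict : S.μ.restrict S.P = S.μ := by
  obtain ⟨c, -, -, hμ⟩ := S.exists_μ_eq_smul
  rw [hμ, Measure.restrict_smul, Measure.restrict_restrict_of_subset subset_rfl]

lemma ae_μ : ae S.μ = ae (volume.restrict S.P) := by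
  obtain ⟨c, hc, -, hμ⟩ := S.exists_μ_eq_smul
  rw [hμ, Measure.ae_ennreal_smul_measure_eq hc]

lemma μ_lt_top : S.μ S.P < ⊤ := by
  obtain ⟨c, -, hc, hμ⟩ := S.exists_μ_eq_smul
  rw [hμ, Measure.smul_apply, Measure.restrict_apply_self, smul_eq_mul]
  exact ENNReal.mul_lt_top hc.lt_top S.simple.1.1.measure_lt_top

lemma μ_ne_zero : S.μ ≠ 0 := by
  rw [Ne, ← ae_eq_bot, S.ae_μ, ae_eq_bot, Measure.restrict_eq_zero]
  exact (Measure.measure_pos_of_nonempty_interior volume S.simple.1.2.1).ne'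

lemma σ_frontier_lt_top : S.σ (frontier S.P) < ⊤ := by
  obtain ⟨ι, _, F, hF, hcover⟩ := S.simple.1.exists_facets_cover
  refine (measure_mono hcover).trans_lt ((measure_iUnion_le F).trans_lt ?_)
  rw [tsum_fintype]
  refine ENNReal.sum_lt_top.2 fun i _ => ?_
  obtain ⟨c, -, hσ⟩ := S.flat_bdry _ (hF i)
  rw [← Measure.restrict_apply_self S.σ, hσ, Measure.smul_apply, Measure.restrict_apply_self]
  exact ENNReal.mul_lt_top ENNReal.ofReal_lt_top
    ((hF i).hausdorffMeasure_lt_top S.simple.1.1.isBounded)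

lemma exists_hausdorffMeasure_restrict_frontier_le :
    ∃ C : ℝ≥0∞, C ≠ ⊤ ∧
      (μH[(n : ℝ) - 1] : Measure (Euc n)).restrict (frontier S.P) ≤ C • S.σ := by
  obtain ⟨ι, _, F, hF, hcover⟩ := S.simple.1.exists_facets_cover
  choose c hc hσ using fun i => S.flat_bdry _ (hF i)
  refine ⟨∑ i, (ENNReal.ofReal (c i))⁻¹, by simpa using hc, ?_⟩
  calc (μH[(n : ℝ) - 1] : Measure (Euc n)).restrict (frontier S.P)
      ≤ (μH[(n : ℝ) - 1] : Measure (Euc n)).restrict (⋃ i, F i) :=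
        Measure.restrict_mono hcover le_rfl
    _ ≤ ∑ i, (μH[(n : ℝ) - 1] : Measure (Euc n)).restrict (F i) :=
        Measure.restrict_iUnion_le.trans_eq (Measure.sum_fintype _)
    _ = ∑ i, (ENNReal.ofReal (c i))⁻¹ • S.σ.restrict (F i) := by
        refine Finset.sum_congr rfl fun i _ => ?_
        rw [hσ, smul_smul, ENNReal.inv_mul_cancel (ENNReal.ofReal_pos.2 (hc i)).ne'
          ENNReal.ofReal_ne_top, one_smul]
    _ ≤ ∑ i, (ENNReal.ofReal (c i))⁻¹ • S.σ := by
        gcongr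
        exact Measure.restrict_le_self
    _ = (∑ i, (ENNReal.ofReal (c i))⁻¹) • S.σ := (Finset.sum_smul ..).symm

lemma exists_setLIntegral_le_frontier {w : Euc n} (hw : w ≠ 0) :
    ∃ C : ℝ≥0∞, C ≠ ⊤ ∧ ∀ (ℓ : ℝ) (h : Euc n → ℝ≥0∞), 0 ≤ ℓ →
      (∀ x ∈ S.P, ∀ s : ℝ, 0 ≤ s → x - s • w ∈ S.P → h x ≤ h (x - s • w)) →
      (∀ x ∈ S.P, x - ℓ • w ∈ S.P → h x = 0) →
      ∫⁻ x in S.P, h x ∂S.μ ≤ C * ENNReal.ofReal ℓ * ∫⁻ x in frontier S.P, h x ∂S.σ := by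
  obtain ⟨c, -, hc, hμ⟩ := S.exists_μ_eq_smul
  obtain ⟨C, hC, hσ⟩ := S.exists_hausdorffMeasure_restrict_frontier_le
  obtain ⟨K, hK, hcollar⟩ := _root_.exists_setLIntegral_le_frontier (volume : Measure (Euc n))
    S.simple.1.1 S.simple.1.convex hw
  rw [finrank_euclideanSpace_fin] at hcollar
  have hfrontier (h : Euc n → ℝ≥0∞) : ∫⁻ x in frontier S.P, h x ∂μH[(n : ℝ) - 1] ≤
      C * ∫⁻ x in frontier S.P, h x ∂S.σ := by
    have hle := Measure.restrict_mono (subset_refl (frontier S.P)) hσ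
    rw [Measure.restrict_restrict_of_subset subset_rfl, Measure.restrict_smul] at hle
    exact (lintegral_mono' hle le_rfl).trans_eq (lintegral_smul_measure ..)
  refine ⟨c * K * C, by finiteness, fun ℓ h hℓ hmono hzero => ?_⟩
  calc ∫⁻ x in S.P, h x ∂S.μ = c * ∫⁻ x in S.P, h x := by
        rw [S.μ_restrict, hμ, lintegral_smul_measure, smul_eq_mul]
    _ ≤ c * (K * ENNReal.ofReal ℓ * (C * ∫⁻ x in frontier S.P, h x ∂S.σ)) := by
        gcongr
        exact (hcollar ℓ h hℓ hmono hzero).trans (by gcongr; exact hfrontier h)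
    _ = c * K * C * ENNReal.ofReal ℓ * ∫⁻ x in frontier S.P, h x ∂S.σ := by ring

lemma lintegral_expE_ne_zero {Q : Euc n → EReal} (hQ : IsClosedConvex Q) :
    ∫⁻ x in S.P, expE (Q x) ∂S.μ ≠ 0 := by
  rw [S.μ_restrict, Ne, lintegral_eq_zero_iff hQ.measurable_expE]
  intro hzero
  refine S.μ_ne_zero (ae_eq_bot.1 (eventually_false_iff_eq_bot.1 ?_))
  filter_upwards [hzero] with x hx
  rw [expE_eq_exp] at hx
  exact hQ.ne_bot x (EReal.exp_eq_zero_iff.1 hx)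

end NSystem

end Systems

section Entropy

variable {n : ℕ} {S : NSystem n} {q q' : Euc n → EReal}

lemma muNA_congr (h : Set.EqOn q q' S.P) : muNA S q = muNA S q' := by
  have hP : ∫⁻ x in S.P, expE (q x) ∂S.μ = ∫⁻ x in S.P, expE (q' x) ∂S.μ :=
    setLIntegral_congr_fun S.measurableSet_P fun x hx => congrArg expE (h hx)
  have hfrontier :
      ∫⁻ x in frontier S.P, expE (q x) ∂S.σ = ∫⁻ x in frontier S.P, expE (q' x) ∂S.σ :=
    setLIntegral_congr_fun isClosed_frontier.measurableSet fun x hx =>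
      congrArg expE (h (S.frontier_subset hx))
  rw [muNA, muNA, hP, hfrontier]

lemma muNA_le_muNA_iff : muNA S q' ≤ muNA S q ↔
    (∫⁻ x in frontier S.P, expE (q x) ∂S.σ) / (∫⁻ x in S.P, expE (q x) ∂S.μ) ≤
      (∫⁻ x in frontier S.P, expE (q' x) ∂S.σ) / (∫⁻ x in S.P, expE (q' x) ∂S.μ) := by
  have hpos : 0 < 2 * Real.pi := Real.two_pi_pos
  have hneg (r : ℝ≥0∞) : ((-(2 * Real.pi) : ℝ) : EReal) * (r : EReal) =
      -((ENNReal.ofReal (2 * Real.pi) * r : ℝ≥0∞) : EReal) := by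
    rw [EReal.coe_ennreal_mul, EReal.coe_ennreal_ofReal, max_eq_left hpos.le, EReal.coe_neg,
      EReal.neg_mul]
  rw [muNA, muNA, hneg, hneg, EReal.neg_le_neg_iff, EReal.coe_ennreal_le_coe_ennreal_iff,
    ENNReal.mul_le_mul_iff_right (ENNReal.ofReal_pos.2 hpos).ne' ENNReal.ofReal_ne_top]

lemma IsClosedConvex.mem_EExpOne (hq : IsClosedConvex q)
    (hfin : ∫⁻ x in S.P, expE (q x) ∂S.μ < ⊤) : q ∈ EExpOne S :=
  ⟨hq.lsc.lowerSemicontinuousOn _, fun x _ => hq.ne_bot x, hq.eConvexOn _, hfin⟩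

lemma isClosedConvex_zero {E : Type*} [NormedAddCommGroup E] [NormedSpace ℝ E] :
    IsClosedConvex (0 : E → EReal) where
  lsc := continuous_const.lowerSemicontinuous
  ne_bot _ := EReal.zero_ne_bot
  convex_epigraph := by
    have heq : {p : E × ℝ | (0 : E → EReal) p.1 ≤ p.2} =
        LinearMap.snd ℝ E ℝ ⁻¹' Set.Ici 0 := by
      ext p
      simp
    exact heq ▸ (convex_Ici (0 : ℝ)).linear_preimage _

lemma lintegral_frontier_ne_top_of_isMaxOn_muNA (hqS : q ∈ EExpOne S)
    (hmax : IsMaxOn (muNA S) (EExpOne S) q) : ∫⁻ x in frontier S.P, expE (q x) ∂S.σ ≠ ⊤ := by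
  have hexp : ∀ x : Euc n, expE ((0 : Euc n → EReal) x) = 1 := fun x => by simp [expE_eq_exp]
  have hzero : (0 : Euc n → EReal) ∈ EExpOne S := isClosedConvex_zero.mem_EExpOne <| by
    simpa only [hexp, setLIntegral_one] using S.μ_lt_top
  have hratio := muNA_le_muNA_iff.1 (hmax hzero)
  have hfin : (∫⁻ x in frontier S.P, expE ((0 : Euc n → EReal) x) ∂S.σ) /
      (∫⁻ x in S.P, expE ((0 : Euc n → EReal) x) ∂S.μ) ≠ ⊤ := by
    refine ENNReal.div_ne_top ?_ (S.lintegral_expE_ne_zero isClosedConvex_zero)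
    simpa only [hexp, setLIntegral_one] using S.σ_frontier_lt_top.ne
  intro htop
  rw [htop, ENNReal.top_div_of_ne_top hqS.2.2.2.ne] at hratio
  exact hfin (top_le_iff.1 hratio)

lemma eq_zero_of_div_le_div {A A' B B' H κ : ℝ≥0∞} (hA : A ≠ ⊤) (hB : B ≠ ⊤)
    (hdiv : A / B ≤ A' / B') (hAH : A' + H ≤ A) (hBH : B ≤ B' + κ * H) (hκ : κ * A < B) :
    H = 0 := by
  have hH : H ≠ ⊤ := ne_top_of_le_ne_top hA (le_add_self.trans hAH)
  have hA' : A' ≠ ⊤ := ne_top_of_le_ne_top hA (le_self_add.trans hAH)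
  have hcross : A * B' ≤ A' * B := by
    calc A * B' ≤ A' / B' * B * B' := by
          gcongr
          exact (ENNReal.div_le_iff hκ.ne_bot hB).1 hdiv
      _ = B' * (A' / B') * B := by ring
      _ ≤ A' * B := by
          gcongr
          exact ENNReal.mul_div_le
  have hsum : A' * B + B * H ≤ A' * B + κ * A * H := by
    calc A' * B + B * H = (A' + H) * B := by ring
      _ ≤ A * (B' + κ * H) := by gcongr
      _ = A * B' + κ * A * H := by ring
      _ ≤ A' * B + κ * A * H := by gcongr
  by_contra hH0
  exact hκ.not_ge <| (ENNReal.mul_le_mul_iff_left hH0 hH).1 <|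
    (ENNReal.add_le_add_iff_left (ENNReal.mul_ne_top hA' hB)).1 hsum

/-- Lowering a maximizer decreases `∫_P` by at most `κ` times the decrease of `∫_∂P`; if `κ` is less
than the ratio of the two integrals, this cannot improve the entropy unless nothing changes. -/
lemma ae_le_of_isMaxOn_muNA (hq : IsClosedConvex q) (hqS : q ∈ EExpOne S)
    (hmax : IsMaxOn (muNA S) (EExpOne S) q) (hq' : IsClosedConvex q') (hle : q' ≤ q) {κ : ℝ≥0∞}
    (hcollar : ∫⁻ x in S.P, (expE (q x) - expE (q' x)) ∂S.μ ≤
      κ * ∫⁻ x in frontier S.P, (expE (q x) - expE (q' x)) ∂S.σ)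
    (hκ : κ * ∫⁻ x in frontier S.P, expE (q x) ∂S.σ < ∫⁻ x in S.P, expE (q x) ∂S.μ) :
    ∀ᵐ x ∂volume.restrict S.P, q x ≤ q' x := by
  have hsplit (ν : Measure (Euc n)) :
      ∫⁻ x, expE (q x) ∂ν = ∫⁻ x, expE (q' x) ∂ν + ∫⁻ x, (expE (q x) - expE (q' x)) ∂ν := by
    rw [← lintegral_add_left hq'.measurable_expE]
    exact lintegral_congr fun x => (add_tsub_cancel_of_le (expE_mono (hle x))).symm
  have hq'S : q' ∈ EExpOne S := hq'.mem_EExpOne <|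
    (lintegral_mono fun x => expE_mono (hle x)).trans_lt hqS.2.2.2
  have hboundary : ∫⁻ x in frontier S.P, (expE (q x) - expE (q' x)) ∂S.σ = 0 :=
    eq_zero_of_div_le_div (lintegral_frontier_ne_top_of_isMaxOn_muNA hqS hmax) hqS.2.2.2.ne
      (muNA_le_muNA_iff.1 (hmax hq'S)) (hsplit _).ge
      ((hsplit _).trans_le (add_le_add_right hcollar _)) hκ
  rw [hboundary, mul_zero, nonpos_iff_eq_zero, S.μ_restrict] at hcollar
  rw [← S.ae_μ]
  filter_upwards [(lintegral_eq_zero_iff (hq.measurable_expE.sub hq'.measurable_expE)).1 hcollar]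
    with x hx
  have hexp : expE (q x) ≤ expE (q' x) := tsub_eq_zero_iff_le.1 hx
  rw [expE_eq_exp] at hexp
  exact EReal.exp_le_exp_iff.1 hexp

lemma IsClosedConvex.interior_subset_of_mem_EExpOne (hq : IsClosedConvex q)
    (hqS : q ∈ EExpOne S) : interior S.P ⊆ interior {x | q x ≠ ⊤} := by
  refine hq.interior_subset_interior_ne_top volume ?_
  rw [← S.ae_μ, ← S.μ_restrict]
  filter_upwards [ae_lt_top hq.measurable_expE hqS.2.2.2.ne] with x hx htop
  simp [expE_eq_exp, htop] at hx

/-- Points of `P` which stay in `P` when moved by `±η • w` form a compact subset of the interior,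
where `q` is bounded. -/
lemma exists_forall_le_rayInfConv (hq : IsClosedConvex q) (hqS : q ∈ EExpOne S)
    (hoff : ∀ x ∉ S.P, q x = ⊤) {w : Euc n} (htrans : IsTransverse S.P w) {R : ℝ} (hR : 0 ≤ R)
    {η : ℝ} (hη : 0 < η) :
    ∃ N, 0 ≤ N ∧ ∀ x ∈ S.P, x - (2 * η) • w ∈ S.P → q x ≤ rayInfConv q w R N x := by
  have hcompact := S.simple.1.1
  set K : Set (Euc n) := (fun x => x + η • w) ⁻¹' S.P ∩ (fun x => x - η • w) ⁻¹' S.P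
  have hK : IsCompact K :=
    ((Homeomorph.addRight (η • w)).isCompact_preimage.2 hcompact).inter_right
      (hcompact.isClosed.preimage (by fun_prop))
  obtain ⟨C, hC⟩ := hq.exists_le_coe_of_isCompact hK fun x hx =>
    hq.interior_subset_of_mem_EExpOne hqS (htrans x η hη.ne' hx.1 hx.2)
  obtain ⟨m, hm⟩ := hq.exists_coe_le_of_isCompact hcompact hoff
  obtain ⟨N, hN0, hN⟩ : ∃ N, 0 ≤ N ∧ (C - m) / η < N :=
    ((eventually_ge_atTop 0).and (eventually_gt_atTop _)).exists
  refine ⟨N, hN0, fun x hx hdeep => hq.le_rayInfConv_of_le hR hη.le hm (hC _ ⟨?_, ?_⟩) ?_⟩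
  · simpa only [Set.mem_preimage, sub_add_cancel] using hx
  · rwa [Set.mem_preimage, sub_sub, ← add_smul, ← two_mul]
  · rw [div_lt_iff₀ hη] at hN
    linarith

/-- The depth `2 * η` of the collar is chosen so small that the collar estimate makes
`rayInfConv q w R N` a forbidden competitor. -/
lemma exists_ae_le_rayInfConv_of_isMaxOn_muNA (hq : IsClosedConvex q) (hqS : q ∈ EExpOne S)
    (hmax : IsMaxOn (muNA S) (EExpOne S) q) (hoff : ∀ x ∉ S.P, q x = ⊤) {w : Euc n} (hw : w ≠ 0)
    (htrans : IsTransverse S.P w) {R : ℝ} (hR : 0 ≤ R)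
    (hRP : ∀ x ∈ S.P, ∀ t, x + t • w ∈ S.P → t ≤ R) :
    ∃ N, ∀ᵐ x ∂volume.restrict S.P, q x ≤ rayInfConv q w R N x := by
  obtain ⟨C, hC, hcollar⟩ := S.exists_setLIntegral_le_frontier hw
  obtain ⟨η, hη, hsmall⟩ := ENNReal.exists_nnreal_pos_mul_lt
    (a := C * 2 * ∫⁻ x in frontier S.P, expE (q x) ∂S.σ)
    (ENNReal.mul_ne_top (by finiteness) (lintegral_frontier_ne_top_of_isMaxOn_muNA hqS hmax))
    (S.lintegral_expE_ne_zero hq)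
  obtain ⟨N, hN, hdeep⟩ := exists_forall_le_rayInfConv hq hqS hoff htrans hR (NNReal.coe_pos.2 hη)
  refine ⟨N, ae_le_of_isMaxOn_muNA hq hqS hmax (hq.rayInfConv hR w N)
    (rayInfConv_le_self q w hR N) (hcollar (2 * η) _ (by positivity) ?_ ?_) ?_⟩
  · exact fun x _ s hs hxs => hq.expE_sub_expE_rayInfConv_le hoff hR hRP hN hs hxs
  · exact fun x hx hxs => tsub_eq_zero_of_le (expE_mono (hdeep x hx hxs))
  · convert hsmall using 1
    rw [ENNReal.ofReal_mul zero_le_two, ENNReal.ofReal_ofNat, ENNReal.ofReal_coe_nnreal]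
    ring

lemma le_of_ae_le_of_isOpen {E : Type*} [TopologicalSpace E] [MeasurableSpace E]
    [OpensMeasurableSpace E] {μ : Measure E} [μ.IsOpenPosMeasure] {γ : Type*} [LinearOrder γ]
    {f : E → γ} (hf : LowerSemicontinuous f) {P U : Set E} (hP : P ⊆ closure (interior P))
    (hU : IsOpen U) {c : γ} (hae : ∀ᵐ x ∂μ.restrict P, x ∈ U → f x ≤ c) : ∀ x ∈ U ∩ P, f x ≤ c := by
  have hopen : IsOpen (U ∩ interior P) := hU.inter isOpen_interior
  have hae' := (ae_restrict_iff' hopen.measurableSet).1 <|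
    ae_restrict_of_ae_restrict_of_subset (Set.inter_subset_right.trans interior_subset) hae
  have hdense : U ∩ interior P ⊆ closure {x | f x ≤ c} :=
    ((Measure.dense_of_ae hae').open_subset_closure_inter hopen).trans
      (closure_mono fun x hx => hx.2 hx.1 hx.1.1)
  have hclosed : IsClosed {x | f x ≤ c} := hf.isClosed_preimage c
  intro x hx
  exact hclosed.closure_subset_iff.2 (hdense.trans hclosed.closure_eq.subset)
    (hU.inter_closure ⟨hx.1, hP hx.2⟩)

/-- If `v + w` is an interior point, then near `v` the value `rayInfConv q w R N x` is at most
`q (x + w) + N`. -/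
lemma exists_eventually_le_of_isMaxOn_muNA (hq : IsClosedConvex q) (hqS : q ∈ EExpOne S)
    (hmax : IsMaxOn (muNA S) (EExpOne S) q) (hoff : ∀ x ∉ S.P, q x = ⊤) {v : Euc n}
    (hv : v ∈ S.P) : ∃ M : ℝ, ∀ᶠ x in 𝓝[S.P] v, q x ≤ M := by
  obtain ⟨hcompact, hint, -⟩ := S.simple.1
  obtain ⟨w, hvw, htrans⟩ := S.simple.1.exists_transverse v
  obtain ⟨r, hr, hball⟩ := Metric.nhds_basis_closedBall.mem_iff.1 (isOpen_interior.mem_nhds hvw)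
  obtain ⟨C, hC⟩ := hq.exists_le_coe_of_isCompact (isCompact_closedBall (v + w) r)
    (hball.trans (hq.interior_subset_of_mem_EExpOne hqS))
  have hshift : ∀ x ∈ Metric.ball v r, q (x + w) ≤ C := fun x hx =>
    hC _ (by simpa only [Metric.mem_closedBall, dist_add_right] using (Metric.mem_ball.1 hx).le)
  have hnhds : ∀ᶠ x in 𝓝[S.P] v, x ∈ Metric.ball v r ∩ S.P :=
    inter_mem (mem_nhdsWithin_of_mem_nhds (Metric.ball_mem_nhds v hr)) self_mem_nhdsWithin
  by_cases hw : w = 0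
  · refine ⟨C, hnhds.mono fun x hx => ?_⟩
    simpa only [hw, add_zero] using hshift x hx.1
  obtain ⟨R, hR, hRP⟩ := exists_chord_le hcompact.isBounded hw
  have hR1 : 1 ≤ R := hRP v hv 1 (by simpa only [one_smul] using interior_subset hvw)
  obtain ⟨N, hN⟩ := exists_ae_le_rayInfConv_of_isMaxOn_muNA hq hqS hmax hoff hw htrans hR hRP
  refine ⟨C + N, hnhds.mono (le_of_ae_le_of_isOpen (μ := volume) hq.lsc ?_ Metric.isOpen_ball ?_)⟩
  · rw [S.simple.1.convex.closure_interior_eq_closure_of_nonempty_interior hint]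
    exact subset_closure
  · filter_upwards [hN] with x hx hxball
    calc q x ≤ rayInfConv q w R N x := hx
      _ ≤ q (x + (1 : ℝ) • w) + ((N * 1 : ℝ) : EReal) := rayInfConv_le q ⟨zero_le_one, hR1⟩ x
      _ ≤ (C + N : ℝ) := by
        rw [one_smul, mul_one, EReal.coe_add]
        exact add_le_add_left (hshift x hxball) _

lemma exists_forall_le_of_isMaxOn_muNA (hq : IsClosedConvex q) (hqS : q ∈ EExpOne S)
    (hmax : IsMaxOn (muNA S) (EExpOne S) q) (hoff : ∀ x ∉ S.P, q x = ⊤) :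
    ∃ M : ℝ, ∀ x ∈ S.P, q x ≤ M := by
  refine S.simple.1.1.induction_on (p := fun s => ∃ M : ℝ, ∀ x ∈ s, q x ≤ M) ?_ ?_ ?_ ?_
  · exact ⟨0, fun _ hx => hx.elim⟩
  · exact fun s t hst ⟨M, hM⟩ => ⟨M, fun x hx => hM x (hst hx)⟩
  · rintro s t ⟨M, hM⟩ ⟨M', hM'⟩
    refine ⟨max M M', fun x hx => ?_⟩
    rw [EReal.coe_strictMono.monotone.map_max, le_max_iff]
    exact hx.imp (hM x) (hM' x)
  · intro v hv
    obtain ⟨M, hM⟩ := exists_eventually_le_of_isMaxOn_muNA hq hqS hmax hoff hv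
    exact ⟨_, hM, M, fun _ hx => hx⟩

end Entropy

theorem maximizer_of_muNA_bounded_continuous_general {n : ℕ} (S : NSystem n)
    (q : Euc n → EReal) (hq : q ∈ EExpOne S)
    (hmax : ∀ q' ∈ EExpOne S, muNA S q' ≤ muNA S q) :
    (∃ m M : ℝ, ∀ x ∈ S.P, (m : EReal) ≤ q x ∧ q x ≤ (M : EReal)) ∧
    ContinuousOn q S.P := by
  obtain ⟨hlsc, hbot, hconv, hfin⟩ := id hq
  have hcompact := S.simple.1.1
  obtain ⟨Q, hQ, hoff, hQq⟩ := exists_isClosedConvex_extension hcompact.isClosed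
    S.simple.1.convex hlsc hbot hconv
  have hQS : Q ∈ EExpOne S := hQ.mem_EExpOne <|
    (setLIntegral_congr_fun S.measurableSet_P fun x hx => congrArg expE (hQq hx)).trans_lt hfin
  have hQmax : IsMaxOn (muNA S) (EExpOne S) Q := fun q' hq' =>
    (hmax q' hq').trans_eq (muNA_congr hQq).symm
  obtain ⟨m, hm⟩ := hQ.exists_coe_le_of_isCompact hcompact hoff
  obtain ⟨M, hM⟩ := exists_forall_le_of_isMaxOn_muNA hQ hQS hQmax hoff
  have hbounds : ∀ x ∈ S.P, (m : EReal) ≤ q x ∧ q x ≤ M := fun x hx =>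
    ⟨hQq hx ▸ hm x, hQq hx ▸ hM x hx⟩
  exact ⟨⟨m, M, hbounds⟩,
    S.simple.1.continuousOn_of_eConvexOn hconv hlsc fun x hx => (hbounds x hx).2⟩

/-- For a 2-dimensional system, every maximizer `q ∈ ℰ^{exp,1}(P)` of the toric
non-archimedean μ-entropy `𝜇̌_NA` is bounded and continuous on `P`. -/
theorem maximizer_of_muNA_bounded_continuous (S : NSystem 2)
    (q : Euc 2 → EReal) (hq : q ∈ EExpOne S)
    (hmax : ∀ q' ∈ EExpOne S, muNA S q' ≤ muNA S q) :
    (∃ m M : ℝ, ∀ x ∈ S.P, (m : EReal) ≤ q x ∧ q x ≤ (M : EReal)) ∧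
    ContinuousOn q S.P :=
  maximizer_of_muNA_bounded_continuous_general S q hq hmax

end
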